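/- For any fixed s ∈ Int(S_d), A_b(s) = b^{−d/2} ψ_∅(s) (1 + O_s(b)) as b → 0; in particular, b^{d/2} A_b(s) → ψ_∅(s) = {(4π)^d (1−‖s‖₁) ∏_{i=1}^d s_i}^{−1/2} as b → 0, where A_b(s) = ∫_{S_d} κ_{s,b}(x)² dx. -/

import Mathlib

open MeasureTheory ProbabilityTheory Real Filter Finset Matrix

noncomputable section

/-- The unit simplex `S_d = {x ∈ [0,1]^d : x_1 + … + x_d ≤ 1}`. -/
def Sd (d : ℕ) : Set (Fin d → ℝ) :=
  {x | (∀ i, 0 ≤ x i ∧ x i ≤ 1) ∧ ∑ i, x i ≤ 1}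

/-- The interior of the unit simplex. -/
def SdInt (d : ℕ) : Set (Fin d → ℝ) :=
  {x | (∀ i, 0 < x i) ∧ ∑ i, x i < 1}

/-- The Dirichlet(u, v) density on the simplex. -/
def Kdir {d : ℕ} (u : Fin d → ℝ) (v : ℝ) (x : Fin d → ℝ) : ℝ :=
  (Gamma ((∑ i, u i) + v) / (Gamma v * ∏ i, Gamma (u i))) *
    (1 - ∑ i, x i) ^ (v - 1) * ∏ i, (x i) ^ (u i - 1)

/-- The locally adaptive Dirichlet kernel `κ_{s,b}`. -/
def kappa {d : ℕ} (s : Fin d → ℝ) (b : ℝ) : (Fin d → ℝ) → ℝ :=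
  Kdir (fun i => s i / b + 1) ((1 - ∑ i, s i) / b + 1)

/-- `A_b(s) = ∫_{S_d} κ_{s,b}(x)² dx`. -/
def Adir {d : ℕ} (b : ℝ) (s : Fin d → ℝ) : ℝ :=
  ∫ x in Sd d, (kappa s b x) ^ 2

/-- Second partial derivative `∂² m / ∂ s_k ∂ s_ℓ` at `s`. -/
def d2 {d : ℕ} (m : (Fin d → ℝ) → ℝ) (k l : Fin d) (s : Fin d → ℝ) : ℝ :=
  fderiv ℝ (fun x => fderiv ℝ m x (Pi.single l 1)) s (Pi.single k 1)

/-- The function `h_J(s)` from the paper. -/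
def hJfun {d : ℕ} (m : (Fin d → ℝ) → ℝ) (J : Finset (Fin d)) (lam : Fin d → ℝ)
    (s : Fin d → ℝ) : ℝ :=
  if J = Finset.univ then
    ∑ k, ∑ l, (1 / 2 : ℝ) * ((lam k + 1) * (if k = l then 1 else 0) + 1) * d2 m k l s
  else
    ∑ k ∈ Jᶜ, ∑ l ∈ Jᶜ, (1 / 2 : ℝ) * ((if k = l then s k else 0) - s k * s l) * d2 m k l s

/-- The function `ψ_J(s)` from the paper. -/
def psiJ {d : ℕ} (J : Finset (Fin d)) (s : Fin d → ℝ) : ℝ :=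
  ((4 * π) ^ ((d : ℝ) - J.card) * (1 - ∑ i, s i) * ∏ i ∈ Jᶜ, s i) ^ (-(1 : ℝ) / 2)

/-- The product `∏_{i ∈ J} Γ(2λ_i+1) / (2^{2λ_i+1} Γ(λ_i+1)²)`. -/
def gamProd {d : ℕ} (J : Finset (Fin d)) (lam : Fin d → ℝ) : ℝ :=
  ∏ i ∈ J, Gamma (2 * lam i + 1) / ((2 : ℝ) ^ (2 * lam i + 1) * Gamma (lam i + 1) ^ 2)

/-- The local linear smoother with Dirichlet kernel. -/
def mLL {d n : ℕ} (b : ℝ) (X : Fin n → Fin d → ℝ) (Y : Fin n → ℝ) (s : Fin d → ℝ) : ℝ :=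
  let 𝒳 : Matrix (Fin n) (Fin (d + 1)) ℝ :=
    Matrix.of fun i => Fin.cases 1 (fun k => X i k - s k)
  let W : Matrix (Fin n) (Fin n) ℝ := Matrix.diagonal fun i => kappa s b (X i)
  ((𝒳ᵀ * W * 𝒳)⁻¹ *ᵥ (𝒳ᵀ *ᵥ (W *ᵥ Y))) 0

/-- The Nadaraya–Watson estimator with Dirichlet kernel. -/
def mNW {d n : ℕ} (b : ℝ) (X : Fin n → Fin d → ℝ) (Y : Fin n → ℝ) (s : Fin d → ℝ) : ℝ :=
  (∑ i, Y i * kappa s b (X i)) / ∑ j, kappa s b (X j)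

/-- Central second moment `C_b(s; k, ℓ)` of the Dirichlet kernel. -/
def CbM {d : ℕ} (b : ℝ) (s : Fin d → ℝ) (k l : Fin d) : ℝ :=
  ∫ x in Sd d, (x k - s k) * (x l - s l) * kappa s b x

end

/-!
Squaring a Dirichlet density gives, up to a constant, another Dirichlet density, so Dirichlet's
integral evaluates `A_b(s)` exactly. Writing `s₀ = 1 - ‖s‖₁`, the value is
`∏_{i = 0}^{d} (2 s_i / b choose s_i / b) * Γ(1 / b + d + 1)² / Γ(2 / b + d + 1)`,
with central binomial coefficients at real arguments. Legendre's duplication formula and the bound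
`Γ(x + 1/2) ≤ √x Γ(x)`, a case of log-convexity, give
`(2x choose x) = 4 ^ x / √(π x) * (1 + O(1 / x))`; the last factor reduces to the same estimate
through `Γ(x + d + 1) = x ^ d Γ(x + 1) (1 + O(1 / x))`. In the product of the leading terms the
powers of `4` cancel, because `s₀ + ‖s‖₁ = 1`.
-/

section RelativeError

open Asymptotics
open scoped Topology

variable {α β ι 𝕜 : Type*} [NormedField 𝕜] {l : Filter α} {f f' g g' h : α → 𝕜} {e e' : α → ℝ}

lemma isBigO_mul_sub_one {u v : α → 𝕜} (he : e =O[l] (1 : α → ℝ))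
    (hu : (fun x => u x - 1) =O[l] e) (hv : (fun x => v x - 1) =O[l] e) :
    (fun x => u x * v x - 1) =O[l] e := by
  have hu_bdd : u =O[l] (1 : α → ℝ) := by
    simpa using (hu.trans he).add (isBigO_const_const (1 : 𝕜) (one_ne_zero (α := ℝ)) l)
  have huv : (fun x => u x * (v x - 1)) =O[l] e := by simpa using hu_bdd.mul hv
  exact (huv.add hu).congr_left fun x => by ring

/-- `f = g * (1 + O(e))` along the filter `l`: asymptotic equivalence with a relative error of
order `e`. As in `Asymptotics.IsEquivalent.exists_eq_mul`, the quotient is recorded as a factor `u`,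
so that `g` may vanish. -/
def IsEquivalentBigO (l : Filter α) (f g : α → 𝕜) (e : α → ℝ) : Prop :=
  ∃ u : α → 𝕜, f =ᶠ[l] g * u ∧ (fun x => u x - 1) =O[l] e

namespace IsEquivalentBigO

lemma refl (l : Filter α) (f : α → 𝕜) (e : α → ℝ) : IsEquivalentBigO l f f e :=
  ⟨1, by simp, (isBigO_zero e l).congr_left fun _ => (sub_self 1).symm⟩

lemma of_isBigO_div_sub_one (hg : ∀ᶠ x in l, g x ≠ 0) (h : (fun x => f x / g x - 1) =O[l] e) :
    IsEquivalentBigO l f g e :=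
  ⟨f / g, hg.mono fun x hx => (mul_div_cancel₀ (f x) hx).symm, h⟩

lemma congr' (h : IsEquivalentBigO l f g e) (hf : f =ᶠ[l] f') (hg : g =ᶠ[l] g') :
    IsEquivalentBigO l f' g' e := by
  obtain ⟨u, hfu, hu⟩ := h
  exact ⟨u, hf.symm.trans (hfu.trans (hg.mul .rfl)), hu⟩

lemma trans_isBigO (h : IsEquivalentBigO l f g e) (he : e =O[l] e') :
    IsEquivalentBigO l f g e' :=
  h.imp fun _ hu => ⟨hu.1, hu.2.trans he⟩

lemma comp_tendsto (h : IsEquivalentBigO l f g e) {l' : Filter β} {k : β → α}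
    (hk : Tendsto k l' l) : IsEquivalentBigO l' (f ∘ k) (g ∘ k) (e ∘ k) := by
  obtain ⟨u, hfu, hu⟩ := h
  exact ⟨u ∘ k, hfu.comp_tendsto hk, hu.comp_tendsto hk⟩

lemma trans (he : e =O[l] (1 : α → ℝ)) (hfg : IsEquivalentBigO l f g e)
    (hgh : IsEquivalentBigO l g h e) : IsEquivalentBigO l f h e := by
  obtain ⟨u, hfu, hu⟩ := hfg
  obtain ⟨v, hgv, hv⟩ := hgh
  exact ⟨v * u, (hfu.trans (hgv.mul .rfl)).trans (.of_eq (mul_assoc h v u)),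
    isBigO_mul_sub_one he hv hu⟩

lemma mul (he : e =O[l] (1 : α → ℝ)) (h : IsEquivalentBigO l f g e)
    (h' : IsEquivalentBigO l f' g' e) : IsEquivalentBigO l (f * f') (g * g') e := by
  obtain ⟨u, hfu, hu⟩ := h
  obtain ⟨v, hfv, hv⟩ := h'
  exact ⟨u * v, (hfu.mul hfv).trans (.of_eq (mul_mul_mul_comm g u g' v)),
    isBigO_mul_sub_one he hu hv⟩

lemma inv (he : Tendsto e l (𝓝 0)) (h : IsEquivalentBigO l f g e) :
    IsEquivalentBigO l f⁻¹ g⁻¹ e := by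
  obtain ⟨u, hfu, hu⟩ := h
  have hu_one : Tendsto u l (𝓝 1) := by simpa using (hu.trans_tendsto he).add_const 1
  refine ⟨u⁻¹, hfu.inv.trans (.of_eq (mul_inv g u)), ?_⟩
  have hinv : (fun x => (u x)⁻¹ * (u x - 1)) =O[l] e := by
    simpa using ((hu_one.inv₀ one_ne_zero).isBigO_one ℝ).mul hu
  refine hinv.neg_left.congr' ?_ .rfl
  filter_upwards [hu_one.eventually_ne one_ne_zero] with x hx
  simp [mul_sub, hx]

lemma div (he : Tendsto e l (𝓝 0)) (h : IsEquivalentBigO l f g e)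
    (h' : IsEquivalentBigO l f' g' e) : IsEquivalentBigO l (f / f') (g / g') e := by
  simpa only [div_eq_mul_inv] using h.mul (he.isBigO_one ℝ) (h'.inv he)

lemma prod (he : e =O[l] (1 : α → ℝ)) {F G : ι → α → 𝕜} (S : Finset ι)
    (h : ∀ i ∈ S, IsEquivalentBigO l (F i) (G i) e) :
    IsEquivalentBigO l (∏ i ∈ S, F i) (∏ i ∈ S, G i) e := by
  classical
  induction S using Finset.induction_on with
  | empty => simpa using refl l 1 e
  | insert a S ha ih =>
    rw [prod_insert ha, prod_insert ha]
    exact mul he (h a (mem_insert_self a S)) (ih fun i hi => h i (mem_insert_of_mem hi))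

lemma tendsto (he : Tendsto e l (𝓝 0)) (h : IsEquivalentBigO l f g e) {a : 𝕜}
    (hg : Tendsto g l (𝓝 a)) : Tendsto f l (𝓝 a) := by
  obtain ⟨u, hfu, hu⟩ := h
  have hu_one : Tendsto u l (𝓝 1) := by simpa using (hu.trans_tendsto he).add_const 1
  simpa using (hg.mul hu_one).congr' hfu.symm

lemma exists_Ioo_norm_sub_le {f g : ℝ → 𝕜} (h : IsEquivalentBigO (𝓝[>] 0) f g id) :
    ∃ C > (0 : ℝ), ∃ b₀ > (0 : ℝ), ∀ b ∈ Set.Ioo (0 : ℝ) b₀, ‖f b - g b‖ ≤ ‖g b‖ * (C * b) := by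
  obtain ⟨u, hfu, hu⟩ := h
  obtain ⟨C, hC, hbound⟩ := hu.exists_pos
  obtain ⟨b₀, hb₀, hb⟩ := mem_nhdsGT_iff_exists_Ioo_subset.1 (hfu.and hbound.bound)
  refine ⟨C, hC, b₀, hb₀, fun b hbmem => ?_⟩
  obtain ⟨hfb, hub⟩ := hb hbmem
  calc ‖f b - g b‖ = ‖g b‖ * ‖u b - 1‖ := by rw [hfb, ← norm_mul, Pi.mul_apply, mul_sub_one]
    _ ≤ ‖g b‖ * (C * b) := by
      gcongr
      simpa [abs_of_pos hbmem.1] using hub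

lemma comp_const_div {f g : ℝ → 𝕜} (h : IsEquivalentBigO atTop f g (·⁻¹)) {c : ℝ} (hc : 0 < c) :
    IsEquivalentBigO (𝓝[>] 0) (fun b => f (c / b)) (fun b => g (c / b)) id := by
  have hdiv : Tendsto (fun b : ℝ => c / b) (𝓝[>] 0) atTop :=
    tendsto_inv_nhdsGT_zero.const_mul_atTop hc
  refine (h.comp_tendsto hdiv).trans_isBigO ?_
  refine (isBigO_const_mul_self c⁻¹ id (𝓝[>] 0)).congr_left fun b => ?_
  simp [div_eq_inv_mul]

end IsEquivalentBigO

end RelativeError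

section GammaAsymptotics

open Asymptotics

/-- The central binomial coefficient `(2x choose x) = Γ(2x + 1) / Γ(x + 1)²` at a real argument. -/
noncomputable def realCentralBinom (x : ℝ) : ℝ :=
  Gamma (2 * x + 1) / Gamma (x + 1) ^ 2

lemma Gamma_add_half_le_sqrt_mul_Gamma {x : ℝ} (hx : 0 < x) :
    Gamma (x + 1 / 2) ≤ √x * Gamma x := by
  have hΓ := Gamma_pos_of_pos hx
  calc Gamma (x + 1 / 2) = Gamma (1 / 2 * x + 1 / 2 * (x + 1)) := by ring_nf
    _ ≤ Gamma x ^ (1 / 2 : ℝ) * Gamma (x + 1) ^ (1 / 2 : ℝ) :=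
      Gamma_mul_add_mul_le_rpow_Gamma_mul_rpow_Gamma hx (by positivity) (by norm_num)
        (by norm_num) (by norm_num)
    _ = √x * Gamma x := by
      rw [Gamma_add_one hx.ne', ← sqrt_eq_rpow, ← sqrt_eq_rpow, sqrt_mul hx.le,
        mul_left_comm, mul_self_sqrt hΓ.le]

lemma realCentralBinom_eq_Gamma_add_half_div {x : ℝ} (hx : 0 < x) :
    realCentralBinom x = 4 ^ x / √π * (Gamma (x + 1 / 2) / Gamma (x + 1)) := by
  have hduplication := Gamma_mul_Gamma_add_half (x + 1 / 2)
  rw [show x + 1 / 2 + 1 / 2 = x + 1 by ring, show 2 * (x + 1 / 2) = 2 * x + 1 by ring,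
    show 1 - (2 * x + 1) = -(2 * x) by ring, rpow_neg zero_le_two, rpow_mul zero_le_two,
    show (2 : ℝ) ^ (2 : ℝ) = 4 by norm_num] at hduplication
  rw [realCentralBinom]
  field_simp at hduplication ⊢
  exact hduplication.symm

lemma realCentralBinom_le {x : ℝ} (hx : 0 < x) : realCentralBinom x ≤ 4 ^ x / √(π * x) := by
  calc realCentralBinom x = 4 ^ x / √π * (Gamma (x + 1 / 2) / Gamma (x + 1)) :=
        realCentralBinom_eq_Gamma_add_half_div hx
    _ ≤ 4 ^ x / √π * (√x * Gamma x / Gamma (x + 1)) := by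
      rw [Gamma_add_one hx.ne']
      gcongr
      exact Gamma_add_half_le_sqrt_mul_Gamma hx
    _ = 4 ^ x / √(π * x) := by
      rw [Gamma_add_one hx.ne', sqrt_mul pi_pos.le]
      field_simp
      exact sq_sqrt hx.le

lemma le_realCentralBinom {x : ℝ} (hx : 0 < x) :
    4 ^ x / √(π * (x + 1 / 2)) ≤ realCentralBinom x := by
  have hx' : 0 < x + 1 / 2 := by positivity
  have hGamma_le : Gamma (x + 1) ≤ √(x + 1 / 2) * Gamma (x + 1 / 2) := by
    convert Gamma_add_half_le_sqrt_mul_Gamma hx' using 2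
    ring
  calc 4 ^ x / √(π * (x + 1 / 2))
      = 4 ^ x / √π * (Gamma (x + 1 / 2) / (√(x + 1 / 2) * Gamma (x + 1 / 2))) := by
        rw [sqrt_mul pi_pos.le]
        field_simp
    _ ≤ 4 ^ x / √π * (Gamma (x + 1 / 2) / Gamma (x + 1)) := by
      gcongr
    _ = realCentralBinom x := (realCentralBinom_eq_Gamma_add_half_div hx).symm

lemma realCentralBinom_isEquivalentBigO :
    IsEquivalentBigO atTop realCentralBinom (fun x => 4 ^ x / √(π * x)) (·⁻¹) := by
  refine .of_isBigO_div_sub_one ?_ (.of_bound 1 ?_)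
  · filter_upwards [eventually_gt_atTop 0] with x hx
    positivity
  filter_upwards [eventually_gt_atTop 0] with x hx
  have hmain : (0 : ℝ) < 4 ^ x / √(π * x) := by positivity
  have hupper : realCentralBinom x / (4 ^ x / √(π * x)) ≤ 1 :=
    (div_le_one hmain).2 (realCentralBinom_le hx)
  have hlower : 1 - x⁻¹ ≤ realCentralBinom x / (4 ^ x / √(π * x)) := by
    calc 1 - x⁻¹ ≤ x / (x + 1 / 2) := by
          field_simp
          nlinarith
      _ ≤ √(x / (x + 1 / 2)) := by
        refine le_sqrt_of_sq_le (pow_le_of_le_one (by positivity) ?_ two_ne_zero)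
        exact (div_le_one (by positivity)).2 (by linarith)
      _ = 4 ^ x / √(π * (x + 1 / 2)) / (4 ^ x / √(π * x)) := by
        rw [sqrt_div hx.le, sqrt_mul pi_pos.le, sqrt_mul pi_pos.le]
        field_simp
      _ ≤ realCentralBinom x / (4 ^ x / √(π * x)) := by
        gcongr
        exact le_realCentralBinom hx
  rw [norm_eq_abs, norm_eq_abs, abs_of_pos (inv_pos.2 hx), abs_of_nonpos (by linarith)]
  linarith

lemma Gamma_add_natCast_isEquivalentBigO (n : ℕ) :
    IsEquivalentBigO atTop (fun x => Gamma (x + n + 1)) (fun x => x ^ n * Gamma (x + 1)) (·⁻¹) := by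
  induction n with
  | zero => simpa using IsEquivalentBigO.refl atTop (fun x : ℝ => Gamma (x + 1)) (·⁻¹)
  | succ n ih =>
    have hlinear : IsEquivalentBigO atTop (fun x : ℝ => x + n + 1) id (·⁻¹) := by
      refine .of_isBigO_div_sub_one (eventually_ne_atTop 0) ?_
      refine (isBigO_const_mul_self (n + 1 : ℝ) (·⁻¹) atTop).congr' ?_ .rfl
      filter_upwards [eventually_ne_atTop 0] with x hx
      simp only [id]
      field_simp
      ring
    refine (hlinear.mul (tendsto_inv_atTop_zero.isBigO_one ℝ) ih).congr' ?_ ?_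
    · filter_upwards [eventually_gt_atTop 0] with x hx
      have hpos : x + n + 1 ≠ 0 := by positivity
      rw [Pi.mul_apply, ← Gamma_add_one hpos]
      push_cast
      ring_nf
    · filter_upwards with x
      simp only [Pi.mul_apply, id]
      ring

lemma Gamma_sq_div_Gamma_two_mul_isEquivalentBigO (n : ℕ) :
    IsEquivalentBigO atTop (fun x => Gamma (x + n + 1) ^ 2 / Gamma (2 * x + n + 1))
      (fun x => (x / 2) ^ n * (√(π * x) / 4 ^ x)) (·⁻¹) := by
  have he : Tendsto (·⁻¹ : ℝ → ℝ) atTop (nhds 0) := tendsto_inv_atTop_zero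
  have hnum := Gamma_add_natCast_isEquivalentBigO n
  have hden : IsEquivalentBigO atTop (fun x => Gamma (2 * x + n + 1))
      (fun x => (2 * x) ^ n * Gamma (2 * x + 1)) (·⁻¹) := by
    refine (hnum.comp_tendsto (tendsto_id.const_mul_atTop two_pos)).trans_isBigO ?_
    exact (isBigO_const_mul_self 2⁻¹ (·⁻¹) atTop).congr_left fun x => (mul_inv 2 x).symm
  have hratio : IsEquivalentBigO atTop (fun x => Gamma (x + n + 1) ^ 2 / Gamma (2 * x + n + 1))
      (fun x => (x / 2) ^ n * (realCentralBinom x)⁻¹) (·⁻¹) := by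
    refine ((hnum.mul (he.isBigO_one ℝ) hnum).div he hden).congr' (.of_eq ?_) ?_
    · ext x
      simp only [Pi.div_apply, Pi.mul_apply, sq]
    · filter_upwards [eventually_ne_atTop 0] with x hx
      simp only [Pi.div_apply, Pi.mul_apply, realCentralBinom, mul_pow, div_pow]
      field_simp
  have hbinom := (IsEquivalentBigO.refl atTop (fun x : ℝ => (x / 2) ^ n) (·⁻¹)).mul
    (he.isBigO_one ℝ) (realCentralBinom_isEquivalentBigO.inv he)
  refine hratio.trans (he.isBigO_one ℝ) (hbinom.congr' .rfl (.of_eq ?_))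
  ext x
  simp only [Pi.mul_apply, Pi.inv_apply, inv_div]

end GammaAsymptotics

section DirichletIntegral

open scoped ENNReal

/-- The simplex of size `t`, so that slicing the unit simplex stays within the family. -/
def scaledSimplex (d : ℕ) (t : ℝ) : Set (Fin d → ℝ) :=
  {x | (∀ i, 0 ≤ x i) ∧ ∑ i, x i ≤ t}

lemma Sd_eq_scaledSimplex (d : ℕ) : Sd d = scaledSimplex d 1 := by
  ext x
  refine ⟨fun hx => ⟨fun i => (hx.1 i).1, hx.2⟩, fun hx => ⟨fun i => ⟨hx.1 i, ?_⟩, hx.2⟩⟩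
  exact (single_le_sum (fun j _ => hx.1 j) (mem_univ i)).trans hx.2

lemma measurableSet_scaledSimplex (d : ℕ) (t : ℝ) : MeasurableSet (scaledSimplex d t) := by
  simp only [scaledSimplex, measurableSet_setOfPred]
  fun_prop

lemma cons_mem_scaledSimplex {d : ℕ} {t y : ℝ} {x : Fin d → ℝ} :
    (Fin.cons y x : Fin (d + 1) → ℝ) ∈ scaledSimplex (d + 1) t ↔
      y ∈ Set.Icc 0 t ∧ x ∈ scaledSimplex d (t - y) := by
  simp only [scaledSimplex, Set.mem_ofPred_eq, Fin.forall_fin_succ, Fin.cons_zero, Fin.cons_succ,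
    Fin.sum_univ_succ, Set.mem_Icc, le_sub_iff_add_le']
  refine ⟨fun ⟨⟨hy, hx⟩, hsum⟩ => ⟨⟨hy, ?_⟩, hx, hsum⟩,
    fun ⟨⟨hy, _⟩, hx, hsum⟩ => ⟨⟨hy, hx⟩, hsum⟩⟩
  have : 0 ≤ ∑ i, x i := sum_nonneg fun i _ => hx i
  linarith

lemma setLIntegral_scaledSimplex_succ {d : ℕ} {f : (Fin (d + 1) → ℝ) → ℝ≥0∞} (hf : Measurable f)
    (t : ℝ) : ∫⁻ x in scaledSimplex (d + 1) t, f x =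
      ∫⁻ y in Set.Icc 0 t, ∫⁻ x in scaledSimplex d (t - y), f (Fin.cons y x) := by
  have hslice (y : ℝ) (x : Fin d → ℝ) :
      (scaledSimplex (d + 1) t).indicator f (Fin.cons y x) =
        (Set.Icc 0 t).indicator
          (fun y => (scaledSimplex d (t - y)).indicator (fun x => f (Fin.cons y x)) x) y := by
    classical simp only [Set.indicator_apply, cons_mem_scaledSimplex, ite_and]
  have hcons := (volume_preserving_piFinSuccAbove (fun _ : Fin (d + 1) => ℝ) 0).symm
  rw [← lintegral_indicator (measurableSet_scaledSimplex _ t),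
    ← lintegral_indicator measurableSet_Icc,
    ← hcons.lintegral_comp (hf.indicator (measurableSet_scaledSimplex _ t)),
    Measure.volume_eq_prod, lintegral_prod _ (by
      exact ((hf.indicator (measurableSet_scaledSimplex _ t)).comp
        (MeasurableEquiv.measurable _)).aemeasurable)]
  refine lintegral_congr fun y => ?_
  simp only [MeasurableEquiv.piFinSuccAbove_symm_apply, Fin.insertNthEquiv_zero,
    Fin.consEquiv, Equiv.coe_fn_mk, hslice]
  by_cases hy : y ∈ Set.Icc 0 t
  · simp only [Set.indicator_of_mem hy, lintegral_indicator (measurableSet_scaledSimplex d _)]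
  · simp only [Set.indicator_of_notMem hy, lintegral_zero]

lemma integral_Ioo_rpow_mul_sub_rpow {a c t : ℝ} (ha : 0 < a) (hc : 0 < c) (ht : 0 < t) :
    ∫ x in Set.Ioo 0 t, x ^ (a - 1) * (t - x) ^ (c - 1) = t ^ (a + c - 1) * beta a c := by
  have hscaled := Complex.betaIntegral_scaled a c ht
  rw [intervalIntegral.integral_of_le ht.le, integral_Ioc_eq_integral_Ioo,
    Complex.betaIntegral_eq_Gamma_mul_div _ _ (by simpa) (by simpa)] at hscaled
  apply Complex.ofReal_injective
  calc ((∫ x in Set.Ioo 0 t, x ^ (a - 1) * (t - x) ^ (c - 1) : ℝ) : ℂ)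
      = ∫ x : ℝ in Set.Ioo 0 t, (x : ℂ) ^ ((a : ℂ) - 1) * ((t : ℂ) - x) ^ ((c : ℂ) - 1) := by
        rw [← integral_complex_ofReal]
        refine setIntegral_congr_fun measurableSet_Ioo fun x hx => ?_
        rw [Complex.ofReal_mul, Complex.ofReal_cpow hx.1.le,
          Complex.ofReal_cpow (sub_nonneg.2 hx.2.le)]
        push_cast
        rfl
    _ = ((t ^ (a + c - 1) * beta a c : ℝ) : ℂ) := by
        rw [hscaled, beta, Complex.ofReal_mul, Complex.ofReal_cpow ht.le]
        simp only [Complex.ofReal_div, Complex.ofReal_mul, ← Complex.Gamma_ofReal]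
        push_cast
        rfl

lemma lintegral_Ioo_rpow_mul_sub_rpow {a c t : ℝ} (ha : 0 < a) (hc : 0 < c) (ht : 0 < t) :
    ∫⁻ x in Set.Ioo 0 t, ENNReal.ofReal (x ^ (a - 1) * (t - x) ^ (c - 1)) =
      ENNReal.ofReal (t ^ (a + c - 1) * beta a c) := by
  have hintegral := integral_Ioo_rpow_mul_sub_rpow ha hc ht
  have hpos : 0 < t ^ (a + c - 1) * beta a c := mul_pos (rpow_pos_of_pos ht _) (beta_pos ha hc)
  rw [← hintegral, ofReal_integral_eq_lintegral_ofReal]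
  · exact not_imp_comm.1 integral_undef (hintegral.trans_ne hpos.ne')
  · refine ae_restrict_of_forall_mem measurableSet_Ioo fun x hx => ?_
    exact mul_nonneg (rpow_nonneg hx.1.le _) (rpow_nonneg (sub_nonneg.2 hx.2.le) _)

/-- The unnormalised Dirichlet density on the simplex of size `t`. -/
noncomputable def dirichletWeight {d : ℕ} (u : Fin d → ℝ) (v t : ℝ) (x : Fin d → ℝ) : ℝ :=
  (t - ∑ i, x i) ^ (v - 1) * ∏ i, x i ^ (u i - 1)

/-- The multivariate beta function `Γ(v) ∏ Γ(u i) / Γ(∑ u i + v)`, the normalising constant of the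
Dirichlet distribution. -/
noncomputable def dirichletBeta {d : ℕ} (u : Fin d → ℝ) (v : ℝ) : ℝ :=
  Gamma v * (∏ i, Gamma (u i)) / Gamma ((∑ i, u i) + v)

variable {d : ℕ}

lemma dirichletBeta_pos {u : Fin d → ℝ} {v : ℝ} (hu : ∀ i, 0 < u i) (hv : 0 < v) :
    0 < dirichletBeta u v := by
  have hsum : 0 ≤ ∑ i, u i := sum_nonneg fun i _ => (hu i).le
  have hprod : 0 < ∏ i, Gamma (u i) := prod_pos fun i _ => Gamma_pos_of_pos (hu i)
  exact div_pos (mul_pos (Gamma_pos_of_pos hv) hprod)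
    (Gamma_pos_of_pos (add_pos_of_nonneg_of_pos hsum hv))

lemma dirichletBeta_succ (u : Fin (d + 1) → ℝ) {v : ℝ} (hu : ∀ i, 0 < u i) (hv : 0 < v) :
    dirichletBeta u v =
      dirichletBeta (Fin.tail u) v * beta (u 0) ((∑ i, Fin.tail u i) + v) := by
  have hsum : 0 ≤ ∑ i, Fin.tail u i := sum_nonneg fun i _ => (hu _).le
  have := Gamma_pos_of_pos (add_pos_of_nonneg_of_pos hsum hv)
  simp only [dirichletBeta, beta, Fin.sum_univ_succ, Fin.prod_univ_succ, Fin.tail] at this ⊢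
  rw [add_assoc]
  field_simp

lemma dirichletWeight_cons (u : Fin (d + 1) → ℝ) (v t y : ℝ) (x : Fin d → ℝ) :
    dirichletWeight u v t (Fin.cons y x) =
      y ^ (u 0 - 1) * dirichletWeight (Fin.tail u) v (t - y) x := by
  simp only [dirichletWeight, Fin.sum_univ_succ, Fin.prod_univ_succ, Fin.cons_zero, Fin.cons_succ,
    Fin.tail, sub_sub]
  ring

lemma dirichletWeight_nonneg (u : Fin d → ℝ) (v : ℝ) {t : ℝ} {x : Fin d → ℝ}
    (hx : x ∈ scaledSimplex d t) : 0 ≤ dirichletWeight u v t x :=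
  mul_nonneg (rpow_nonneg (sub_nonneg.2 hx.2) _) (prod_nonneg fun i _ => rpow_nonneg (hx.1 i) _)

lemma measurable_dirichletWeight (u : Fin d → ℝ) (v t : ℝ) :
    Measurable (dirichletWeight u v t) := by
  unfold dirichletWeight
  fun_prop

theorem setLIntegral_dirichletWeight {u : Fin d → ℝ} {v t : ℝ} (hu : ∀ i, 0 < u i) (hv : 0 < v)
    (ht : 0 < t) : ∫⁻ x in scaledSimplex d t, ENNReal.ofReal (dirichletWeight u v t x) =
      ENNReal.ofReal (t ^ ((∑ i, u i) + v - 1) * dirichletBeta u v) := by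
  induction d generalizing t with
  | zero =>
    have huniv : scaledSimplex 0 t = Set.univ := by
      ext x
      simp [scaledSimplex, ht.le]
    simp [huniv, dirichletWeight, dirichletBeta, volume_pi, (Gamma_pos_of_pos hv).ne']
  | succ d ih =>
    have hu_tail (i : Fin d) : 0 < Fin.tail u i := hu i.succ
    set c := (∑ i, Fin.tail u i) + v with hc_def
    have hc : 0 < c := add_pos_of_nonneg_of_pos (sum_nonneg fun i _ => (hu_tail i).le) hv
    have hslice (y : ℝ) (hy : y ∈ Set.Ioo 0 t) :
        ∫⁻ x in scaledSimplex d (t - y), ENNReal.ofReal (dirichletWeight u v t (Fin.cons y x)) =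
          ENNReal.ofReal (dirichletBeta (Fin.tail u) v) *
            ENNReal.ofReal (y ^ (u 0 - 1) * (t - y) ^ (c - 1)) := by
      simp only [dirichletWeight_cons, ENNReal.ofReal_mul (rpow_nonneg hy.1.le _)]
      rw [lintegral_const_mul _ (measurable_dirichletWeight _ _ _).ennreal_ofReal,
        ih hu_tail (sub_pos.2 hy.2), ENNReal.ofReal_mul (rpow_nonneg (sub_nonneg.2 hy.2.le) _)]
      ring
    calc ∫⁻ x in scaledSimplex (d + 1) t, ENNReal.ofReal (dirichletWeight u v t x)
        = ∫⁻ y in Set.Ioo 0 t, ENNReal.ofReal (dirichletBeta (Fin.tail u) v) *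
            ENNReal.ofReal (y ^ (u 0 - 1) * (t - y) ^ (c - 1)) := by
          rw [setLIntegral_scaledSimplex_succ (measurable_dirichletWeight u v t).ennreal_ofReal,
            ← restrict_Ioo_eq_restrict_Icc, setLIntegral_congr_fun measurableSet_Ioo hslice]
      _ = ENNReal.ofReal (t ^ ((∑ i, u i) + v - 1) * dirichletBeta u v) := by
          rw [lintegral_const_mul' _ _ ENNReal.ofReal_ne_top,
            lintegral_Ioo_rpow_mul_sub_rpow (hu 0) hc ht,
            ← ENNReal.ofReal_mul (dirichletBeta_pos hu_tail hv).le, dirichletBeta_succ u hu hv,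
            ← hc_def, Fin.sum_univ_succ, add_assoc (u 0)]
          simp only [Fin.tail] at hc_def ⊢
          rw [← hc_def]
          ring_nf

theorem setIntegral_dirichletWeight {u : Fin d → ℝ} {v t : ℝ} (hu : ∀ i, 0 < u i) (hv : 0 < v)
    (ht : 0 < t) : ∫ x in scaledSimplex d t, dirichletWeight u v t x =
      t ^ ((∑ i, u i) + v - 1) * dirichletBeta u v := by
  rw [integral_eq_lintegral_of_nonneg_ae
    (ae_restrict_of_forall_mem (measurableSet_scaledSimplex d t)
      fun x => dirichletWeight_nonneg u v)
    (measurable_dirichletWeight u v t).aestronglyMeasurable,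
    setLIntegral_dirichletWeight hu hv ht, ENNReal.toReal_ofReal]
  exact mul_nonneg (rpow_nonneg ht.le _) (dirichletBeta_pos hu hv).le

end DirichletIntegral

section DirichletKernel

open Asymptotics
open scoped Topology

variable {d : ℕ}

lemma Kdir_eq_inv_dirichletBeta_mul (u : Fin d → ℝ) (v : ℝ) (x : Fin d → ℝ) :
    Kdir u v x = (dirichletBeta u v)⁻¹ * dirichletWeight u v 1 x := by
  rw [Kdir, dirichletBeta, dirichletWeight, inv_div, mul_assoc]

lemma dirichletWeight_sq (u : Fin d → ℝ) (v : ℝ) {t : ℝ} {x : Fin d → ℝ}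
    (hx : x ∈ scaledSimplex d t) :
    dirichletWeight u v t x ^ 2 =
      dirichletWeight (fun i => 2 * u i - 1) (2 * v - 1) t x := by
  have hsq {y : ℝ} (hy : 0 ≤ y) (a : ℝ) : (y ^ (a - 1)) ^ 2 = y ^ (2 * a - 1 - 1) := by
    rw [← rpow_mul_natCast hy]
    push_cast
    ring_nf
  simp only [dirichletWeight, mul_pow, ← prod_pow, hsq (sub_nonneg.2 hx.2), hsq (hx.1 _)]

lemma setIntegral_Kdir_sq {u : Fin d → ℝ} {v : ℝ} (hu : ∀ i, 1 / 2 < u i) (hv : 1 / 2 < v) :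
    ∫ x in Sd d, Kdir u v x ^ 2 =
      dirichletBeta (fun i => 2 * u i - 1) (2 * v - 1) / dirichletBeta u v ^ 2 := by
  calc ∫ x in Sd d, Kdir u v x ^ 2
      = ∫ x in scaledSimplex d 1, (dirichletBeta u v ^ 2)⁻¹ *
          dirichletWeight (fun i => 2 * u i - 1) (2 * v - 1) 1 x := by
        rw [Sd_eq_scaledSimplex]
        refine setIntegral_congr_fun (measurableSet_scaledSimplex d 1) fun x hx => ?_
        simp only [Kdir_eq_inv_dirichletBeta_mul, mul_pow, inv_pow, dirichletWeight_sq u v hx]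
    _ = dirichletBeta (fun i => 2 * u i - 1) (2 * v - 1) / dirichletBeta u v ^ 2 := by
        rw [integral_const_mul, setIntegral_dirichletWeight (fun i => by linarith [hu i])
          (by linarith) one_pos, one_rpow, one_mul, inv_mul_eq_div]

lemma dirichletBeta_two_mul_div_sq (p : Fin d → ℝ) (q : ℝ) :
    dirichletBeta (fun i => 2 * p i + 1) (2 * q + 1) /
        dirichletBeta (fun i => p i + 1) (q + 1) ^ 2 =
      realCentralBinom q * (∏ i, realCentralBinom (p i)) *
        (Gamma ((∑ i, p i) + q + d + 1) ^ 2 / Gamma (2 * ((∑ i, p i) + q) + d + 1)) := by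
  have hsum : ∑ i, (p i + 1) + (q + 1) = (∑ i, p i) + q + d + 1 := by
    simp only [sum_add_distrib, sum_const, card_univ, Fintype.card_fin, nsmul_one]
    ring
  have hsum_two : ∑ i, (2 * p i + 1) + (2 * q + 1) = 2 * ((∑ i, p i) + q) + d + 1 := by
    simp only [sum_add_distrib, ← mul_sum, sum_const, card_univ, Fintype.card_fin, nsmul_one]
    ring
  simp only [dirichletBeta, realCentralBinom, hsum, hsum_two, prod_div_distrib, prod_pow]
  simp only [div_eq_mul_inv, mul_pow, mul_inv, inv_pow, inv_inv]
  ring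

lemma SdInt_subset_Sd (d : ℕ) : SdInt d ⊆ Sd d := by
  rw [Sd_eq_scaledSimplex]
  exact fun s hs => ⟨fun i => (hs.1 i).le, hs.2.le⟩

lemma Adir_eq_realCentralBinom_mul {s : Fin d → ℝ} (hs : s ∈ Sd d) {b : ℝ} (hb : 0 < b) :
    Adir b s = realCentralBinom ((1 - ∑ i, s i) / b) * (∏ i, realCentralBinom (s i / b)) *
      (Gamma (1 / b + d + 1) ^ 2 / Gamma (2 * (1 / b) + d + 1)) := by
  have hs_div (i : Fin d) : 0 ≤ s i / b := div_nonneg (hs.1 i).1 hb.le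
  have hq_div : 0 ≤ (1 - ∑ i, s i) / b := div_nonneg (sub_nonneg.2 hs.2) hb.le
  have hsum : ∑ i, s i / b + (1 - ∑ i, s i) / b = 1 / b := by
    rw [← sum_div]
    ring
  have htwo (a : ℝ) : 2 * (a + 1) - 1 = 2 * a + 1 := by ring
  calc Adir b s
      = dirichletBeta (fun i => 2 * (s i / b + 1) - 1) (2 * ((1 - ∑ i, s i) / b + 1) - 1) /
          dirichletBeta (fun i => s i / b + 1) ((1 - ∑ i, s i) / b + 1) ^ 2 :=
        setIntegral_Kdir_sq (fun i => by linarith [hs_div i]) (by linarith)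
    _ = _ := by simp only [htwo, dirichletBeta_two_mul_div_sq, hsum]

lemma psiJ_empty {s : Fin d → ℝ} (hs : s ∈ Sd d) :
    psiJ ∅ s = (√(4 * π) ^ d * √(1 - ∑ i, s i) * ∏ i, √(s i))⁻¹ := by
  have hs_nonneg (i : Fin d) : 0 ≤ s i := (hs.1 i).1
  have hq : 0 ≤ 1 - ∑ i, s i := sub_nonneg.2 hs.2
  have hprod : 0 ≤ ∏ i, s i := prod_nonneg fun i _ => hs_nonneg i
  rw [psiJ, card_empty, Nat.cast_zero, sub_zero, compl_empty, rpow_natCast, neg_div,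
    rpow_neg (by positivity), ← sqrt_eq_rpow, sqrt_mul (by positivity), sqrt_mul (by positivity),
    sqrt_prod _ fun i _ => hs_nonneg i, ← sqrt_sq (pow_nonneg (sqrt_nonneg (4 * π)) d),
    pow_right_comm, sq_sqrt (by positivity)]

lemma psiJ_empty_nonneg {s : Fin d → ℝ} (hs : s ∈ Sd d) : 0 ≤ psiJ ∅ s := by
  rw [psiJ_empty hs]
  positivity

lemma prod_four_rpow_div_sqrt_eq_rpow_mul_psiJ_empty {s : Fin d → ℝ} (hs : s ∈ Sd d) {b : ℝ}
    (hb : 0 < b) :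
    4 ^ ((1 - ∑ i, s i) / b) / √(π * ((1 - ∑ i, s i) / b)) *
        (∏ i, 4 ^ (s i / b) / √(π * (s i / b))) *
        ((1 / b / 2) ^ d * (√(π * (1 / b)) / 4 ^ (1 / b))) =
      b ^ (-(d : ℝ) / 2) * psiJ ∅ s := by
  have hsqrt (c : ℝ) : √(π * (c / b)) = √π / √b * √c := by
    rw [mul_div_left_comm, mul_comm, sqrt_mul (by positivity), sqrt_div pi_pos.le]
  have hfour : (4 : ℝ) ^ ((1 - ∑ i, s i) / b) * ∏ i, (4 : ℝ) ^ (s i / b) = 4 ^ (1 / b) := by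
    rw [← rpow_sum_of_pos four_pos, ← rpow_add four_pos, ← sum_div, ← add_div, sub_add_cancel]
  have hb_rpow : b ^ (-(d : ℝ) / 2) = (√b ^ d)⁻¹ := by
    rw [neg_div, rpow_neg hb.le, sqrt_eq_rpow, ← rpow_mul_natCast hb.le, one_div_mul_eq_div]
  have hbase : 1 / b / 2 / (√π / √b) = (√b * √(4 * π))⁻¹ := by
    rw [sqrt_mul zero_le_four, show (4 : ℝ) = 2 ^ 2 by norm_num, sqrt_sq zero_le_two]
    field_simp
    rw [sq_sqrt hb.le]
  calc 4 ^ ((1 - ∑ i, s i) / b) / √(π * ((1 - ∑ i, s i) / b)) *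
          (∏ i, 4 ^ (s i / b) / √(π * (s i / b))) *
          ((1 / b / 2) ^ d * (√(π * (1 / b)) / 4 ^ (1 / b)))
      = (4 ^ ((1 - ∑ i, s i) / b) * ∏ i, 4 ^ (s i / b)) / 4 ^ (1 / b) *
          (1 / b / 2 / (√π / √b)) ^ d * (√(1 - ∑ i, s i) * ∏ i, √(s i))⁻¹ := by
        simp only [hsqrt, prod_div_distrib, prod_mul_distrib, prod_const, card_univ,
          Fintype.card_fin, sqrt_one, div_pow, mul_one]
        field_simp
    _ = (√b ^ d)⁻¹ * (√(4 * π) ^ d * √(1 - ∑ i, s i) * ∏ i, √(s i))⁻¹ := by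
        rw [hfour, div_self (by positivity), hbase]
        simp only [inv_pow, mul_pow, mul_inv]
        ring
    _ = b ^ (-(d : ℝ) / 2) * psiJ ∅ s := by
        rw [psiJ_empty hs, hb_rpow]

theorem Adir_isEquivalentBigO {s : Fin d → ℝ} (hs : s ∈ SdInt d) :
    IsEquivalentBigO (𝓝[>] 0) (fun b => Adir b s) (fun b => b ^ (-(d : ℝ) / 2) * psiJ ∅ s) id := by
  have he : (id : ℝ → ℝ) =O[𝓝[>] 0] (1 : ℝ → ℝ) :=
    (tendsto_id.mono_left nhdsWithin_le_nhds).isBigO_one ℝ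
  have hbinom {c : ℝ} (hc : 0 < c) := realCentralBinom_isEquivalentBigO.comp_const_div hc
  have hGamma := (Gamma_sq_div_Gamma_two_mul_isEquivalentBigO d).comp_const_div one_pos
  have hprod := IsEquivalentBigO.prod he univ fun i _ => hbinom (hs.1 i)
  refine (((hbinom (sub_pos.2 hs.2)).mul he hprod).mul he hGamma).congr' ?_ ?_
  · filter_upwards [self_mem_nhdsWithin] with b hb
    simp only [Pi.mul_apply, prod_apply, Adir_eq_realCentralBinom_mul (SdInt_subset_Sd d hs) hb]
  · filter_upwards [self_mem_nhdsWithin] with b hb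
    simp only [Pi.mul_apply, prod_apply,
      ← prod_four_rpow_div_sqrt_eq_rpow_mul_psiJ_empty (SdInt_subset_Sd d hs) hb]

end DirichletKernel

/-- asymptotics of `A_b(s)` at a fixed interior point. -/
theorem Ab_interior_asymptotics (d : ℕ) (hd : 0 < d) (s : Fin d → ℝ) (hs : s ∈ SdInt d) :
    (∃ C > (0 : ℝ), ∃ b₀ > (0 : ℝ), ∀ b ∈ Set.Ioo (0 : ℝ) b₀,
      |Adir b s - b ^ (-(d : ℝ) / 2) * psiJ (∅ : Finset (Fin d)) s| ≤
        b ^ (-(d : ℝ) / 2) * psiJ (∅ : Finset (Fin d)) s * (C * b)) ∧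
    Tendsto (fun b : ℝ => b ^ ((d : ℝ) / 2) * Adir b s) (nhdsWithin 0 (Set.Ioi 0))
      (nhds (psiJ (∅ : Finset (Fin d)) s)) := by
  have hequiv := Adir_isEquivalentBigO hs
  constructor
  · obtain ⟨C, hC, b₀, hb₀, hbound⟩ := hequiv.exists_Ioo_norm_sub_le
    refine ⟨C, hC, b₀, hb₀, fun b hb => (hbound b hb).trans_eq ?_⟩
    rw [norm_of_nonneg (mul_nonneg (rpow_nonneg hb.1.le _)
      (psiJ_empty_nonneg (SdInt_subset_Sd d hs)))]
  · have he : Tendsto (id : ℝ → ℝ) (nhdsWithin 0 (Set.Ioi 0)) (nhds 0) :=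
      tendsto_id.mono_left nhdsWithin_le_nhds
    have hscaled := (IsEquivalentBigO.refl _ (fun b : ℝ => b ^ ((d : ℝ) / 2)) id).mul
      (he.isBigO_one ℝ) hequiv
    refine hscaled.tendsto he (tendsto_const_nhds.congr' ?_)
    filter_upwards [self_mem_nhdsWithin] with b hb
    rw [Pi.mul_apply, ← mul_assoc, ← rpow_add hb, neg_div, add_neg_cancel, rpow_zero, one_mul]
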